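/- Let f ∈ C_0(R^N) (continuous, vanishing at infinity) and let ρ ∈ L¹(R) with ∫_R ρ(z) dz = 1. For w ∈ R^N define h_w ∈ L¹(R^N) by h_w(y) := ∏_{j=1}^N w(j)·ρ(w(j)·y(j)). Then f(x) = lim_{Ω→∞} Ω^{−N} ∫_{[0,Ω]^N} (f * h_w)(x) dw uniformly for all x ∈ R^N; that is, for every ε > 0 there exists Ω₀ > 0 such that for every Ω ≥ Ω₀, sup_{x∈R^N} | f(x) − Ω^{−N} ∫_{[0,Ω]^N} (f * h_w)(x) dw | < ε. -/

import Mathlib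

open MeasureTheory Filter

noncomputable section

/-- The product kernel `h_w(y) := ∏_{j=1}^N w(j)·ρ(w(j)·y(j))`. -/
def hker {N : ℕ} (ρ : ℝ → ℝ) (w y : EuclideanSpace ℝ (Fin N)) : ℝ :=
  ∏ j, w j * ρ (w j * y j)

/-- Convolution `(f * g)(x) := ∫ f(y)·g(x − y) dy`. -/
def convWith {N : ℕ} (f g : EuclideanSpace ℝ (Fin N) → ℝ)
    (x : EuclideanSpace ℝ (Fin N)) : ℝ :=
  ∫ y, f y * g (x - y)

/-!
The substitutions `w = Ω u` and `z j = w j * y j` turn the average over the cube into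
`∫ u in [0,1]^N, ∫ z, (∏ j, ρ (z j)) * f (x - Ω⁻¹ (z / u))`. The displacements `Ω⁻¹ (z / u)` tend to
zero pointwise and `f` is bounded and uniformly continuous, so dominated convergence applies.
Applying it along the countably generated filter `atTop ×ˢ ⊤` on pairs `(Ω, x)` makes the
convergence uniform in `x`.
-/

section ShrinkingTranslates

lemma tendsto_sub_comp_sub_prod_top {κ E G : Type*} [SeminormedAddCommGroup E]
    [SeminormedAddCommGroup G] {F : E → G} (hF : UniformContinuous F) {l : Filter κ} {h : κ → E}
    (hh : Tendsto h l (nhds 0)) :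
    Tendsto (fun q : κ × E ↦ F q.2 - F (q.2 - h q.1)) (l ×ˢ ⊤) (nhds 0) := by
  have hclose : Tendsto (fun q : κ × E ↦ (q.2, q.2 - h q.1)) (l ×ˢ ⊤) (uniformity E) := by
    rw [tendsto_uniformity_iff_dist_tendsto_zero]
    simpa [dist_eq_norm] using (hh.comp tendsto_fst).norm
  rw [tendsto_zero_iff_norm_tendsto_zero]
  simpa only [dist_eq_norm, Function.comp_def] using
    tendsto_uniformity_iff_dist_tendsto_zero.1 (Tendsto.comp hF hclose)

variable {α κ E G : Type*} [MeasurableSpace α] {μ : Measure α} [SeminormedAddCommGroup E]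
  [NormedAddCommGroup G] [NormedSpace ℝ G] {F : E → G} {p : α → ℝ}

lemma integrable_smul_comp_sub (hF : Continuous F) (hFb : Bornology.IsBounded (Set.range F))
    (hp : Integrable p μ) {φ : α → E} (hφ : AEStronglyMeasurable φ μ) (x : E) :
    Integrable (fun a ↦ p a • F (x - φ a)) μ := by
  obtain ⟨C, hC⟩ := hFb.exists_norm_le
  exact hp.smul_bdd C (hF.comp_aestronglyMeasurable (aestronglyMeasurable_const.sub hφ))
    (Eventually.of_forall fun _ ↦ hC _ (Set.mem_range_self _))

theorem tendstoUniformly_integral_smul_comp_sub [CompleteSpace G] {l : Filter κ}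
    [l.IsCountablyGenerated] (hF : UniformContinuous F) (hFb : Bornology.IsBounded (Set.range F))
    (hp : Integrable p μ) {φ : κ → α → E} (hφ : ∀ k, AEStronglyMeasurable (φ k) μ)
    (hφ0 : ∀ᵐ a ∂μ, Tendsto (fun k ↦ φ k a) l (nhds 0)) :
    TendstoUniformly (fun k x ↦ ∫ a, p a • F (x - φ k a) ∂μ) (fun x ↦ (∫ a, p a ∂μ) • F x) l := by
  obtain ⟨C, hC⟩ := Metric.isBounded_iff.1 hFb
  have hdiam (x y : E) : ‖F x - F y‖ ≤ C :=
    dist_eq_norm (F x) (F y) ▸ hC (Set.mem_range_self x) (Set.mem_range_self y)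
  have hint (k : κ) (x : E) : Integrable (fun a ↦ p a • F (x - φ k a)) μ :=
    integrable_smul_comp_sub hF.continuous hFb hp (hφ k) x
  have hdiff (q : κ × E) : (∫ a, p a ∂μ) • F q.2 - ∫ a, p a • F (q.2 - φ q.1 a) ∂μ =
      ∫ a, p a • (F q.2 - F (q.2 - φ q.1 a)) ∂μ := by
    simp only [smul_sub]
    rw [integral_sub (hp.smul_const _) (hint _ _), integral_smul_const]
  have hpointwise : ∀ᵐ a ∂μ, Tendsto (fun q : κ × E ↦ p a • (F q.2 - F (q.2 - φ q.1 a)))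
      (l ×ˢ ⊤) (nhds 0) := by
    filter_upwards [hφ0] with a ha
    simpa using (tendsto_sub_comp_sub_prod_top hF ha).const_smul (p a)
  have hlim : Tendsto (fun q : κ × E ↦ ∫ a, p a • (F q.2 - F (q.2 - φ q.1 a)) ∂μ)
      (l ×ˢ ⊤) (nhds 0) := by
    rw [← integral_zero α G (μ := μ)]
    refine tendsto_integral_filter_of_dominated_convergence (fun a ↦ ‖p a‖ * C) ?_ ?_
      (hp.norm.mul_const C) hpointwise
    · refine Eventually.of_forall fun q ↦ ?_
      simpa only [smul_sub] using! ((hp.smul_const (F q.2)).sub (hint q.1 q.2)).aestronglyMeasurable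
    · refine Eventually.of_forall fun q ↦ Eventually.of_forall fun a ↦ ?_
      rw [norm_smul]
      exact mul_le_mul_of_nonneg_left (hdiam _ _) (norm_nonneg _)
  rw [tendstoUniformly_iff_tendsto, tendsto_uniformity_iff_dist_tendsto_zero]
  simpa only [dist_eq_norm, hdiff, norm_zero] using hlim.norm

end ShrinkingTranslates

section ChangeOfVariables

variable {ι G : Type*} [Fintype ι] [NormedAddCommGroup G] [NormedSpace ℝ G]

lemma integral_comp_linearMap {E : Type*} [NormedAddCommGroup E] [NormedSpace ℝ E]
    [FiniteDimensional ℝ E] [MeasurableSpace E] [BorelSpace E] (μ : Measure E)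
    [μ.IsAddHaarMeasure] (T : E →ₗ[ℝ] E) (hT : T.det ≠ 0) (g : E → G) :
    ∫ x, g (T x) ∂μ = |T.det⁻¹| • ∫ x, g x ∂μ := by
  have hemb : MeasurableEmbedding T :=
    (T.equivOfDetNeZero hT).toContinuousLinearEquiv.toHomeomorph.measurableEmbedding
  rw [← hemb.integral_map, Measure.map_linearMap_addHaar_eq_smul_addHaar μ hT,
    integral_smul_measure, ENNReal.toReal_ofReal (abs_nonneg _)]

lemma integral_comp_pi_mul {v : ι → ℝ} (hv : ∀ j, v j ≠ 0) (g : (ι → ℝ) → G) :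
    ∫ z, g (v * z) = |(∏ j, v j)⁻¹| • ∫ z, g z := by
  classical
  have hdet : (Matrix.toLin' (Matrix.diagonal v)).det = ∏ j, v j := by
    rw [LinearMap.det_toLin', Matrix.det_diagonal]
  have hmul (z : ι → ℝ) : Matrix.toLin' (Matrix.diagonal v) z = v * z := by
    ext j
    rw [Matrix.toLin'_apply, Matrix.mulVec_diagonal, Pi.mul_apply]
  have hne : (Matrix.toLin' (Matrix.diagonal v)).det ≠ 0 :=
    hdet ▸ Finset.prod_ne_zero_iff.2 fun j _ ↦ hv j
  simpa only [hdet, hmul] using integral_comp_linearMap volume _ hne g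

lemma cube_average_eq_setIntegral_unitCube {Ω : ℝ} (hΩ : 0 < Ω) (H : EuclideanSpace ℝ ι → G) :
    (Ω ^ Fintype.card ι)⁻¹ • ∫ w in {w : EuclideanSpace ℝ ι | ∀ j, w j ∈ Set.Icc 0 Ω}, H w =
      ∫ u in Set.Icc (0 : ι → ℝ) 1, H (WithLp.toLp 2 (Ω • u)) := by
  open scoped Pointwise in
  have hcube : WithLp.toLp 2 ⁻¹' {w : EuclideanSpace ℝ ι | ∀ j, w j ∈ Set.Icc 0 Ω} =
      Ω • Set.Icc (0 : ι → ℝ) 1 := by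
    ext v
    simp [Set.mem_smul_set_iff_inv_smul_mem₀ hΩ.ne', Pi.le_def, forall_and, inv_mul_le_iff₀ hΩ, hΩ]
  rw [← (PiLp.volume_preserving_toLp ι).setIntegral_preimage_emb
      (MeasurableEquiv.toLp 2 (ι → ℝ)).measurableEmbedding, hcube,
    Measure.setIntegral_comp_smul_of_pos volume (fun v ↦ H (WithLp.toLp 2 v)) _ hΩ,
    Module.finrank_fintype_fun_eq_card]

instance isProbabilityMeasure_restrict_unitCube :
    IsProbabilityMeasure (volume.restrict (Set.Icc (0 : ι → ℝ) 1)) :=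
  ⟨by simp [Real.volume_Icc_pi]⟩

lemma ae_restrict_unitCube_pos : ∀ᵐ u ∂volume.restrict (Set.Icc (0 : ι → ℝ) 1), ∀ j, 0 < u j := by
  rw [volume_pi, ← Measure.restrict_congr_set Measure.univ_pi_Ioc_ae_eq_Icc]
  filter_upwards [ae_restrict_mem (MeasurableSet.univ_pi fun _ ↦ measurableSet_Ioc)] with u hu j
  exact (hu j (Set.mem_univ j)).1

end ChangeOfVariables

section ProductKernel

lemma measurable_toLp_div {ι : Type*} :
    Measurable (fun a : (ι → ℝ) × (ι → ℝ) ↦ (WithLp.toLp 2 (a.2 / a.1) : EuclideanSpace ℝ ι)) :=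
  (WithLp.measurable_toLp 2 _).comp (measurable_snd.div measurable_fst)

variable {N : ℕ}

lemma convWith_hker_eq_integral {w : Fin N → ℝ} (hw : ∀ j, 0 < w j)
    (f : EuclideanSpace ℝ (Fin N) → ℝ) (ρ : ℝ → ℝ) (x : EuclideanSpace ℝ (Fin N)) :
    convWith f (hker ρ (WithLp.toLp 2 w)) x =
      ∫ z : Fin N → ℝ, (∏ j, ρ (z j)) • f (x - WithLp.toLp 2 (z / w)) := by
  have hprod : 0 < ∏ j, w j := Finset.prod_pos fun j _ ↦ hw j
  have hcancel (y : Fin N → ℝ) : w * y / w = y :=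
    funext fun j ↦ mul_div_cancel_left₀ (y j) (hw j).ne'
  calc convWith f (hker ρ (WithLp.toLp 2 w)) x
    _ = ∫ y, f (x - y) * hker ρ (WithLp.toLp 2 w) y := by
      simp only [convWith, ← integral_sub_left_eq_self
        (fun y ↦ f (x - y) * hker ρ (WithLp.toLp 2 w) y) volume x, sub_sub_cancel]
    _ = ∫ y : Fin N → ℝ, f (x - WithLp.toLp 2 y) * hker ρ (WithLp.toLp 2 w) (WithLp.toLp 2 y) :=
      ((PiLp.volume_preserving_toLp (Fin N)).integral_comp
        (MeasurableEquiv.toLp 2 (Fin N → ℝ)).measurableEmbedding _).symm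
    _ = (∏ j, w j) * ∫ y : Fin N → ℝ,
          (∏ j, ρ ((w * y) j)) • f (x - WithLp.toLp 2 (w * y / w)) := by
      rw [← integral_const_mul]
      refine integral_congr_ae (Eventually.of_forall fun y ↦ ?_)
      simp only [hker, hcancel, Finset.prod_mul_distrib, Pi.mul_apply, smul_eq_mul]
      ring
    _ = ∫ z : Fin N → ℝ, (∏ j, ρ (z j)) • f (x - WithLp.toLp 2 (z / w)) := by
      rw [integral_comp_pi_mul (fun j ↦ (hw j).ne')
          (fun z ↦ (∏ j, ρ (z j)) • f (x - WithLp.toLp 2 (z / w))),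
        abs_of_pos (inv_pos.2 hprod), smul_eq_mul, mul_inv_cancel_left₀ hprod.ne']

lemma cube_average_convWith_hker {Ω : ℝ} (hΩ : 0 < Ω) {f : EuclideanSpace ℝ (Fin N) → ℝ}
    (hf : Continuous f) (hfb : Bornology.IsBounded (Set.range f)) {ρ : ℝ → ℝ}
    (hρ : Integrable ρ) (x : EuclideanSpace ℝ (Fin N)) :
    (Ω ^ N)⁻¹ * ∫ w in {w : EuclideanSpace ℝ (Fin N) | ∀ j, w j ∈ Set.Icc (0 : ℝ) Ω},
        convWith f (hker ρ w) x =
      ∫ a : (Fin N → ℝ) × (Fin N → ℝ), (∏ j, ρ (a.2 j)) •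
        f (x - Ω⁻¹ • WithLp.toLp 2 (a.2 / a.1))
        ∂(volume.restrict (Set.Icc 0 1)).prod volume := by
  have hscale (z u : Fin N → ℝ) : (WithLp.toLp 2 (z / (Ω • u)) : EuclideanSpace ℝ (Fin N)) =
      Ω⁻¹ • WithLp.toLp 2 (z / u) := by
    ext j
    simp only [Pi.div_apply, Pi.smul_apply, PiLp.smul_apply, smul_eq_mul]
    field_simp
  have hprod : Integrable (fun z : Fin N → ℝ ↦ ∏ j, ρ (z j)) := Integrable.fintype_prod fun _ ↦ hρ
  have haverage := cube_average_eq_setIntegral_unitCube hΩ fun w ↦ convWith f (hker ρ w) x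
  rw [Fintype.card_fin, smul_eq_mul] at haverage
  rw [haverage, integral_prod _ (integrable_smul_comp_sub hf hfb (hprod.comp_snd _)
    (measurable_toLp_div.fun_const_smul Ω⁻¹).aestronglyMeasurable x)]
  refine integral_congr_ae (ae_restrict_unitCube_pos.mono fun u hu ↦ ?_)
  have hpos (j : Fin N) : 0 < (Ω • u) j := mul_pos hΩ (hu j)
  simp only [convWith_hker_eq_integral hpos, hscale]

theorem limit_integral_representation_C0_general {f : EuclideanSpace ℝ (Fin N) → ℝ}
    (hf : UniformContinuous f) (hfb : Bornology.IsBounded (Set.range f)) {ρ : ℝ → ℝ}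
    (hρ : Integrable ρ) :
    TendstoUniformly
      (fun Ω x ↦ (Ω ^ N)⁻¹ *
        ∫ w in {w : EuclideanSpace ℝ (Fin N) | ∀ j, w j ∈ Set.Icc (0 : ℝ) Ω},
          convWith f (hker ρ w) x)
      (fun x ↦ (∫ z, ρ z) ^ N * f x) atTop := by
  have hprod : Integrable (fun z : Fin N → ℝ ↦ ∏ j, ρ (z j)) := Integrable.fintype_prod fun _ ↦ hρ
  have hmass : ∫ a : (Fin N → ℝ) × (Fin N → ℝ), ∏ j, ρ (a.2 j)
      ∂(volume.restrict (Set.Icc 0 1)).prod volume = (∫ z, ρ z) ^ N := by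
    rw [integral_fun_snd (fun z : Fin N → ℝ ↦ ∏ j, ρ (z j)), integral_fintype_prod_volume_eq_pow]
    simp
  have hshrink (a : (Fin N → ℝ) × (Fin N → ℝ)) : Tendsto
      (fun Ω : ℝ ↦ Ω⁻¹ • (WithLp.toLp 2 (a.2 / a.1) : EuclideanSpace ℝ (Fin N)))
      atTop (nhds 0) := by
    simpa using (tendsto_inv_atTop_zero (𝕜 := ℝ)).smul_const
      (WithLp.toLp 2 (a.2 / a.1) : EuclideanSpace ℝ (Fin N))
  have hlim := tendstoUniformly_integral_smul_comp_sub hf hfb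
    (hprod.comp_snd (volume.restrict (Set.Icc 0 1)))
    (fun Ω ↦ (measurable_toLp_div.fun_const_smul Ω⁻¹).aestronglyMeasurable)
    (Eventually.of_forall hshrink)
  simp only [hmass, smul_eq_mul] at hlim
  refine (tendstoUniformly_congr ((eventually_gt_atTop 0).mono fun Ω hΩ ↦ ?_)).2 hlim
  exact funext fun x ↦ cube_average_convWith_hker hΩ hf.continuous hfb hρ x

end ProductKernel

/-- **Limit-integral representation of `f ∈ C₀(ℝ^N)` (Lemma "Step 1").**
Let `ρ ∈ L¹(ℝ)` with `∫ ρ = 1` and `h_w(y) := ∏_j w(j)·ρ(w(j)·y(j))`.  Then for every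
continuous `f : ℝ^N → ℝ` vanishing at infinity,
`f(x) = lim_{Ω→∞} Ω^{−N} ∫_{[0,Ω]^N} (f * h_w)(x) dw` uniformly in `x`: for every `ε > 0`
there is `Ω₀ > 0` such that for all `Ω ≥ Ω₀` and all `x ∈ ℝ^N`,
`|f(x) − Ω^{−N} ∫_{[0,Ω]^N} (f * h_w)(x) dw| < ε`. -/
theorem limit_integral_representation_C0
    {N : ℕ} (f : EuclideanSpace ℝ (Fin N) → ℝ) (hfc : Continuous f)
    (hf0 : Tendsto f (cocompact (EuclideanSpace ℝ (Fin N))) (nhds 0))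
    (ρ : ℝ → ℝ) (hρ1 : Integrable ρ) (hρint : ∫ z, ρ z = 1) :
    ∀ ε > 0, ∃ Ω₀ > 0, ∀ Ω ≥ Ω₀, ∀ x : EuclideanSpace ℝ (Fin N),
      |f x - (Ω ^ N)⁻¹ *
        ∫ w in {w : EuclideanSpace ℝ (Fin N) | ∀ j, w j ∈ Set.Icc (0 : ℝ) Ω},
          convWith f (hker ρ w) x| < ε := by
  intro ε hε
  have h := limit_integral_representation_C0_general
    (hfc.uniformContinuous_of_tendsto_cocompact hf0)
    (ZeroAtInftyContinuousMap.isBounded_range ⟨⟨f, hfc⟩, hf0⟩) hρ1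
  obtain ⟨Ω₀, hΩ₀⟩ := ((Metric.tendstoUniformly_iff.1 h ε hε).and
    (eventually_gt_atTop 0)).exists_forall_of_atTop
  exact ⟨Ω₀, (hΩ₀ Ω₀ le_rfl).2, by simpa [hρint, Real.dist_eq] using fun Ω hΩ ↦ (hΩ₀ Ω hΩ).1⟩
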